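/- arXiv:2112.08753 — 6 statements merged into one kernel-verified Lean document; each statement's English description precedes it below -/
import Mathlib

section
/- Let φ : ℝ → ℝ be three times differentiable, let R > 0 be a real constant, and suppose the function t ↦ e^{−2φ(t)}·(R − 2·(φ'(t)² + 2·φ''(t))) is constant on ℝ. Then at every t with φ'(t) ≠ 0 one has R = −2·(φ'''(t) − φ'(t)·φ''(t) − φ'(t)³)/φ'(t), and hence (φ'''(t) − φ'(t)·φ''(t) − φ'(t)³)/φ'(t) < 0. If moreover φ''' ≡ 0, then R = 2·(φ''(t) + φ'(t)²), and so φ''(t) + φ'(t)² > 0, at every t with φ'(t) ≠ 0. -/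
/-!
Differentiating the constant function `e^{-2φ}(R - 2(φ'² + 2φ''))` and cancelling the nonvanishing
exponential gives the identity `R φ' = -2(φ''' - φ'φ'' - φ'³)` at every point
(`mul_deriv_eq_of_conformal_curvature_const`). All the claims follow from it by dividing by `φ'`
and using `R > 0`.
-/

/-- The derivative of the constancy condition on the conformal scalar curvature, with the
exponential factor cancelled. It holds also where `φ'` vanishes. -/
lemma mul_deriv_eq_of_conformal_curvature_const {φ : ℝ → ℝ} {R c : ℝ}
    (hφ : Differentiable ℝ φ) (hφ' : Differentiable ℝ (deriv φ))
    (hφ'' : Differentiable ℝ (deriv (deriv φ)))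
    (hc : ∀ t : ℝ,
      Real.exp (-2 * φ t) * (R - 2 * ((deriv φ t) ^ 2 + 2 * deriv (deriv φ) t)) = c) (t : ℝ) :
    R * deriv φ t = -2 * (deriv (deriv (deriv φ)) t - deriv φ t * deriv (deriv φ) t
      - (deriv φ t) ^ 3) := by
  have h1 := ((hφ t).hasDerivAt.const_mul (-2)).exp
  have h2 := ((((hφ' t).hasDerivAt.fun_pow 2).fun_add
    ((hφ'' t).hasDerivAt.const_mul 2)).const_mul 2).const_sub R
  have h3 := h1.fun_mul h2
  have h4 : HasDerivAt (fun t : ℝ => Real.exp (-2 * φ t) *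
      (R - 2 * ((deriv φ t) ^ 2 + 2 * deriv (deriv φ) t))) 0 t := by
    simpa only [funext hc] using hasDerivAt_const t c
  have h5 := h3.unique h4
  have he : Real.exp (-2 * φ t) ≠ 0 := (Real.exp_pos _).ne'
  apply mul_left_cancel₀ he
  push_cast at h5
  linear_combination (-1 / 2) * h5

/-- Proposition 3 of the paper: if `R > 0` is constant and
`R̃ = e^{-2φ}(R - 2(φ'² + 2φ''))` is constant, then wherever `φ' ≠ 0` one has
`R = -2(φ''' - φ'φ'' - φ'³)/φ'` and hence `(φ''' - φ'φ'' - φ'³)/φ' < 0`; if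
moreover `φ''' ≡ 0`, then `R = 2(φ'' + φ'²)` and `φ'' + φ'² > 0` wherever `φ' ≠ 0`. -/
theorem stmt_3 (φ : ℝ → ℝ) (R : ℝ) (hR : R > 0)
    (hφ : Differentiable ℝ φ) (hφ' : Differentiable ℝ (deriv φ))
    (hφ'' : Differentiable ℝ (deriv (deriv φ)))
    (hconst : ∃ c : ℝ, ∀ t : ℝ,
      Real.exp (-2 * φ t) * (R - 2 * ((deriv φ t) ^ 2 + 2 * deriv (deriv φ) t)) = c) :
    (∀ t : ℝ, deriv φ t ≠ 0 →
      R = -2 * (deriv (deriv (deriv φ)) t - deriv φ t * deriv (deriv φ) t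
            - (deriv φ t) ^ 3) / deriv φ t ∧
      (deriv (deriv (deriv φ)) t - deriv φ t * deriv (deriv φ) t - (deriv φ t) ^ 3)
          / deriv φ t < 0) ∧
    ((∀ t : ℝ, deriv (deriv (deriv φ)) t = 0) →
      ∀ t : ℝ, deriv φ t ≠ 0 →
        R = 2 * (deriv (deriv φ) t + (deriv φ t) ^ 2) ∧
        deriv (deriv φ) t + (deriv φ t) ^ 2 > 0) := by
  obtain ⟨c, hc⟩ := hconst
  have key := mul_deriv_eq_of_conformal_curvature_const hφ hφ' hφ'' hc
  refine ⟨fun t ht => ?_, fun h3 t ht => ?_⟩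
  · have hR' : R = -2 * (deriv (deriv (deriv φ)) t - deriv φ t * deriv (deriv φ) t
        - (deriv φ t) ^ 3) / deriv φ t := by
      rw [eq_div_iff ht, key t]
    refine ⟨hR', ?_⟩
    rw [mul_div_assoc] at hR'
    linarith
  · have hR' : R = 2 * (deriv (deriv φ) t + (deriv φ t) ^ 2) := by
      apply mul_right_cancel₀ ht
      rw [key t, h3 t]
      ring
    exact ⟨hR', by linarith⟩
end

section
/- Let Θ, Σ, ξ, Ω, 𝒜, ϕ, Q, ℋ, ℰ, Π, ρ, p be real numbers satisfying: 0 = (1/2)·((2/3)Θ − Σ)·(2𝒜 − ϕ) + 2ξΩ + Q; 0 = −(1/2)·((2/3)Θ − Σ)·ξ + (1/2)·(2𝒜 − ϕ)·Ω; 0 = 𝒜ξ − ((2/3)Θ − Σ)·Ω; 0 = −3ξℰ − (3/2)·((2/3)Θ − Σ)·ℋ + ΩQ; 0 = 3ξℋ + (1/2)·ϕ·Q + ((2/3)Θ − Σ)·((1/2)(ρ + p) − (3/2)(ℰ + (1/6)Π)); together with ϕ = 2𝒜, 𝒜 ≠ 0, and (2/3)Θ − Σ ≠ 0. Then ξ =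 0, Ω = 0, Q = 0, ℋ = 0, and ρ + p = 3·(ℰ + (1/6)Π). -/
/-! With `ϕ = 2 * A` the system is triangular: each equation in turn, once the quantities already
shown to vanish are substituted, either is linear in the next unknown or says that
`(2 / 3) * Θ - Sg`, which is nonzero, times that unknown is zero. The order is `ξ` from `e19`,
`Ω` from `e20`, `Q` from `e18`, `HH` from `e21`, and the matter relation from `e22`. -/

/-- constraints (6.18)-(6.22) of the paper with the
conformal-Killing conditions `ϕ = 2𝒜`, `𝒜 ≠ 0`, `(2/3)Θ - Σ ≠ 0`:
the twist `ξ`, rotation `Ω`, heat flux `Q` and magnetic Weyl scalar `ℋ`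
vanish and `ρ + p = 3(ℰ + (1/6)Π)`. Here `Θ` is the expansion, `Σ` the shear
scalar, `𝒜` the acceleration, `ϕ` the sheet expansion, `ℰ` the electric Weyl
scalar, `ρ` the energy density, `p` the pressure, `Π` the anisotropic stress. -/
theorem stmt_10 (Θ Sg ξ Ω A ϕ Q HH EE Pi ρ p : ℝ)
    (e18 : 0 = (1 / 2) * ((2 / 3) * Θ - Sg) * (2 * A - ϕ) + 2 * ξ * Ω + Q)
    (e19 : 0 = -(1 / 2) * ((2 / 3) * Θ - Sg) * ξ + (1 / 2) * (2 * A - ϕ) * Ω)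
    (e20 : 0 = A * ξ - ((2 / 3) * Θ - Sg) * Ω)
    (e21 : 0 = -3 * ξ * EE - (3 / 2) * ((2 / 3) * Θ - Sg) * HH + Ω * Q)
    (e22 : 0 = 3 * ξ * HH + (1 / 2) * ϕ * Q
        + ((2 / 3) * Θ - Sg) * ((1 / 2) * (ρ + p) - (3 / 2) * (EE + (1 / 6) * Pi)))
    (hϕA : ϕ = 2 * A) (hA : A ≠ 0) (hTS : (2 / 3) * Θ - Sg ≠ 0) :
    ξ = 0 ∧ Ω = 0 ∧ Q = 0 ∧ HH = 0 ∧ ρ + p = 3 * (EE + (1 / 6) * Pi) := by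
  subst hϕA
  have hξ : ξ = 0 := (mul_eq_zero.mp (by linarith : ((2 / 3) * Θ - Sg) * ξ = 0)).resolve_left hTS
  subst hξ
  have hΩ : Ω = 0 := (mul_eq_zero.mp (by linarith : ((2 / 3) * Θ - Sg) * Ω = 0)).resolve_left hTS
  subst hΩ
  have hQ : Q = 0 := by linarith
  subst hQ
  have hH : HH = 0 := (mul_eq_zero.mp (by linarith : ((2 / 3) * Θ - Sg) * HH = 0)).resolve_left hTS
  have hE : (1 / 2) * (ρ + p) - (3 / 2) * (EE + (1 / 6) * Pi) = 0 :=
    (mul_eq_zero.mp (by linarith : ((2 / 3) * Θ - Sg) *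
      ((1 / 2) * (ρ + p) - (3 / 2) * (EE + (1 / 6) * Pi)) = 0)).resolve_left hTS
  exact ⟨rfl, rfl, rfl, hH, by linarith⟩
end

section
/- Let Θ, Σ, 𝒜, ϕ, ρ, p, Π, ℰ : ℝ → ℝ with 𝒜 and ϕ differentiable, satisfying for all t: ϕ = 2𝒜; Σ = −(1/3)Θ; ρ + p = 3·(ℰ + (1/6)Π); 0 = −Θ(ρ + p) − (3/2)ΣΠ; ϕ' = −(1/2)ϕ² + ((1/3)Θ + Σ)·((2/3)Θ − Σ) − (2/3)ρ − (ℰ + (1/2)Π); 𝒜' = −(𝒜 + ϕ)·𝒜 − (1/3)Θ² + (3/2)Σ² + (1/2)(ρ + 3p); and 0 = 𝒜ϕ − (1/2)·((2/3)Θ − Σ)² + ℰ − (1/2)Π − (1/3)(ρ + 3p). Then for all t: Θ(t) = 0, Σ(t) = 0, Π(t) = 2·(ρ(t) + p(t)), ℰ(t) = 0, and ϕ(t)² = (8/3)·ρ(t) + 4·p(t); in particular, at every t with ϕ(t) ≠ 0, ρ(t) > −(3/2)·p(t). -/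
/-! Since `ϕ = 2𝒜`, the two propagation equations must agree, and combining this algebraically
with the remaining constraint gives `ℰ = (2/9) Θ²`. The shear equation together with `Σ = -Θ/3`
says `Θ ℰ = 0`, so `Θ³ = 0`; everything else is then linear algebra in the constraints. -/

/-- Lemma of Section VIII: on a constant-time slice of an LRS
class II spacetime admitting a conformal Killing vector `γe` along the
preferred spatial direction (so `ϕ = 2𝒜` and `(1/3)Θ + Σ = 0`), the field
equations force the slice to be time-symmetric (`Θ = Σ = 0`) and conformally
flat (`ℰ = 0`), with `Π = 2(ρ + p)`, `ϕ² = (8/3)ρ + 4p`; in particular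
wherever `ϕ ≠ 0` one has `ρ > -(3/2)p`. Here `Sg` denotes the shear scalar
`Σ`, `A` the acceleration `𝒜`, `EE` the electric Weyl scalar `ℰ`, and `Pi`
the anisotropic stress `Π`. -/
theorem stmt_11 (Θ Sg A ϕ ρ p Pi EE : ℝ → ℝ)
    (hA : Differentiable ℝ A) (hϕ : Differentiable ℝ ϕ)
    (hϕA : ∀ t : ℝ, ϕ t = 2 * A t)
    (hSg : ∀ t : ℝ, Sg t = -(1 / 3) * Θ t)
    (h7c : ∀ t : ℝ, ρ t + p t = 3 * (EE t + (1 / 6) * Pi t))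
    (e614 : ∀ t : ℝ, 0 = -(Θ t) * (ρ t + p t) - (3 / 2) * Sg t * Pi t)
    (e68 : ∀ t : ℝ, deriv ϕ t = -(1 / 2) * (ϕ t) ^ 2
        + ((1 / 3) * Θ t + Sg t) * ((2 / 3) * Θ t - Sg t)
        - (2 / 3) * ρ t - (EE t + (1 / 2) * Pi t))
    (e613 : ∀ t : ℝ, deriv A t = -(A t + ϕ t) * A t - (1 / 3) * (Θ t) ^ 2
        + (3 / 2) * (Sg t) ^ 2 + (1 / 2) * (ρ t + 3 * p t))
    (e617 : ∀ t : ℝ, 0 = A t * ϕ t - (1 / 2) * ((2 / 3) * Θ t - Sg t) ^ 2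
        + EE t - (1 / 2) * Pi t - (1 / 3) * (ρ t + 3 * p t)) :
    (∀ t : ℝ, Θ t = 0 ∧ Sg t = 0 ∧ Pi t = 2 * (ρ t + p t) ∧ EE t = 0 ∧
      (ϕ t) ^ 2 = (8 / 3) * ρ t + 4 * p t) ∧
    (∀ t : ℝ, ϕ t ≠ 0 → ρ t > -(3 / 2) * p t) := by
  -- Differentiating `ϕ = 2𝒜` makes the two propagation equations comparable.
  have hd : ∀ t, deriv ϕ t = 2 * deriv A t := by
    intro t
    have hfun : ϕ = fun s => 2 * A s := funext hϕA
    rw [hfun]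
    exact deriv_const_mul 2 (hA t)
  have key : ∀ t, Θ t = 0 ∧ Sg t = 0 ∧ Pi t = 2 * (ρ t + p t) ∧ EE t = 0 ∧
      (ϕ t) ^ 2 = (8 / 3) * ρ t + 4 * p t := by
    intro t
    have h1 := hd t
    have h2 := h7c t
    have h3 := e614 t
    have h4 := e617 t
    rw [e68 t, e613 t, hϕA t, hSg t] at h1
    rw [hSg t] at h3
    rw [hϕA t, hSg t] at h4
    -- Subtract the algebraic constraint from the compatibility condition; `𝒜²`, `ρ`, `p` cancel.
    have hE : EE t = (2 / 9) * Θ t ^ 2 := by linarith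
    have hPi : Pi t = 2 * (ρ t + p t) - 6 * EE t := by linarith
    have hcube : Θ t ^ 3 = 0 := by
      rw [hPi, hE] at h3
      linarith
    have hΘ : Θ t = 0 := pow_eq_zero_iff (by norm_num) |>.mp hcube
    have hE0 : EE t = 0 := by rw [hE, hΘ]; norm_num
    rw [hΘ, hE0] at h4
    rw [hE0] at hPi
    refine ⟨hΘ, by rw [hSg t, hΘ]; ring, by linarith, hE0, ?_⟩
    rw [hϕA t]
    linarith
  refine ⟨key, fun t ht => ?_⟩
  have hpos : 0 < ϕ t ^ 2 := by positivity
  have := (key t).2.2.2.2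
  linarith
end

section
/- Let Θ, Σ, 𝒜, ϕ, ρ, p, Π, ℰ : ℝ → ℝ with 𝒜 and ϕ differentiable, satisfying for all t: ϕ = 2𝒜; Σ = −(1/3)Θ; ρ + p = 3·(ℰ + (1/6)Π); 0 = −Θ(ρ + p) − (3/2)ΣΠ; ϕ' = −(1/2)ϕ² + ((1/3)Θ + Σ)·((2/3)Θ − Σ) − (2/3)ρ − (ℰ + (1/2)Π); 𝒜' = −(𝒜 + ϕ)·𝒜 − (1/3)Θ² + (3/2)Σ² + (1/2)(ρ + 3p); and 0 = 𝒜ϕ − (1/2)·((2/3)Θ − Σ)² + ℰ − (1/2)Π − (1/3)(ρ + 3p). If in addition Π ≡ 0 (the slice is of Einstein type), then ρ + p ≡ 0 and ϕ² = −(4/3)ρ; hence at every t with ϕ(t) ≠ 0 the energy density is strictly negative, ρ(t) < 0. If moreover ρ is constant, then ϕ·ϕ' ≡ 0, so if ϕ is nowhere zero then ϕ' ≡ 0 and the associated conformal transformation generated by γe^μ is not proper. -/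
/-!
Everything except the constant-density part is pointwise algebra. Write `s = ρ + p`; since `Π = 0`,
`ℰ = s / 3`. As `ϕ = 2𝒜`, the two propagation equations give two expressions for `ϕ' = 2𝒜'`;
eliminating `ρ` between their difference and the algebraic constraint `e617` leaves
`s = (2/3) Θ²`. Together with `Θ s = 0` this gives `Θ³ = 0`, so `Θ = 0` and `s = 0`, and `e617`
collapses to `ϕ² = -(4/3) ρ`. For constant `ρ` the function `ϕ²` is constant, so its derivative
`2 ϕ ϕ'` vanishes.
-/

/-- eqs. (6.34), (6.35), (allo1) of Section VIII: under the same
field equations and conformal-Killing conditions as in the Lemma, if the slice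
is of Einstein type (`Π ≡ 0`) then `ρ + p ≡ 0` and `ϕ² = -(4/3)ρ`, so the
energy density is strictly negative wherever `ϕ ≠ 0`; if moreover `ρ` is
constant then `ϕ·ϕ' ≡ 0`, hence if `ϕ` is nowhere zero then `ϕ' ≡ 0` and the
conformal transformation generated by `γe` is not proper. -/
theorem stmt_12 (Θ Sg A ϕ ρ p Pi EE : ℝ → ℝ)
    (hA : Differentiable ℝ A) (hϕ : Differentiable ℝ ϕ)
    (hϕA : ∀ t : ℝ, ϕ t = 2 * A t)
    (hSg : ∀ t : ℝ, Sg t = -(1 / 3) * Θ t)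
    (h7c : ∀ t : ℝ, ρ t + p t = 3 * (EE t + (1 / 6) * Pi t))
    (e614 : ∀ t : ℝ, 0 = -(Θ t) * (ρ t + p t) - (3 / 2) * Sg t * Pi t)
    (e68 : ∀ t : ℝ, deriv ϕ t = -(1 / 2) * (ϕ t) ^ 2
        + ((1 / 3) * Θ t + Sg t) * ((2 / 3) * Θ t - Sg t)
        - (2 / 3) * ρ t - (EE t + (1 / 2) * Pi t))
    (e613 : ∀ t : ℝ, deriv A t = -(A t + ϕ t) * A t - (1 / 3) * (Θ t) ^ 2
        + (3 / 2) * (Sg t) ^ 2 + (1 / 2) * (ρ t + 3 * p t))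
    (e617 : ∀ t : ℝ, 0 = A t * ϕ t - (1 / 2) * ((2 / 3) * Θ t - Sg t) ^ 2
        + EE t - (1 / 2) * Pi t - (1 / 3) * (ρ t + 3 * p t))
    (hEinstein : ∀ t : ℝ, Pi t = 0) :
    (∀ t : ℝ, ρ t + p t = 0) ∧
    (∀ t : ℝ, (ϕ t) ^ 2 = -(4 / 3) * ρ t) ∧
    (∀ t : ℝ, ϕ t ≠ 0 → ρ t < 0) ∧
    ((∃ c : ℝ, ∀ t : ℝ, ρ t = c) → (∀ t : ℝ, ϕ t * deriv ϕ t = 0)) ∧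
    ((∃ c : ℝ, ∀ t : ℝ, ρ t = c) → (∀ t : ℝ, ϕ t ≠ 0) →
      ∀ t : ℝ, deriv ϕ t = 0) := by
  have hderiv : ∀ t, deriv ϕ t = 2 * deriv A t := fun t => by
    rw [funext hϕA, deriv_const_mul _ (hA t)]
  -- Compatibility of the two propagation equations with the constraint.
  have hsum : ∀ t, ρ t + p t = (2 / 3) * Θ t ^ 2 := fun t => by
    have h1 := h7c t
    have h2 := e68 t
    have h3 := e613 t
    have h4 := e617 t
    rw [hderiv t] at h2
    rw [hEinstein t] at h1 h2 h4
    rw [hSg t] at h2 h3 h4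
    rw [hϕA t] at h2 h3 h4
    linarith
  have hΘ : ∀ t, Θ t = 0 := fun t => by
    have h := e614 t
    rw [hEinstein t, hsum t] at h
    have h3 : Θ t ^ 3 = 0 := by linarith
    exact pow_eq_zero_iff (by norm_num) |>.mp h3
  have hs : ∀ t, ρ t + p t = 0 := fun t => by rw [hsum t, hΘ t]; norm_num
  have hsq : ∀ t, ϕ t ^ 2 = -(4 / 3) * ρ t := fun t => by
    have h1 := h7c t
    have h4 := e617 t
    have h5 := hs t
    rw [hEinstein t] at h1 h4
    rw [hSg t, hΘ t, hϕA t] at h4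
    rw [hϕA t]
    linarith
  have hconst : (∃ c : ℝ, ∀ t, ρ t = c) → ∀ t, ϕ t * deriv ϕ t = 0 := by
    rintro ⟨c, hc⟩ t
    have h1 := (hϕ t).hasDerivAt.fun_pow 2
    have h2 : (fun x => ϕ x ^ 2) = fun _ => -(4 / 3) * c :=
      funext fun x => by rw [hsq x, hc x]
    rw [h2] at h1
    have h3 := h1.unique (hasDerivAt_const t _)
    norm_num at h3
    exact mul_eq_zero.mpr h3
  refine ⟨hs, hsq, fun t ht => ?_, hconst, fun h hne t => ?_⟩
  · have h1 : 0 < ϕ t ^ 2 := by positivity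
    linarith [hsq t]
  · exact (mul_eq_zero.mp (hconst h t)).resolve_left (hne t)
end

section
/- Let ϕ, Σ : ℝ → ℝ with Σ differentiable, Σ(t) > 0 and Σ'(t) = −(1/2)·ϕ(t)·Σ(t) for all t. Then γ := 1/Σ satisfies γ'(t) = (1/2)·ϕ(t)·γ(t) for all t (so X^μ = γe^μ satisfies the conformal Killing equation along e^μ), and the associated conformal factor is v = γ' = ϕ/(2Σ). Moreover, if ϕ is differentiable, then at every t with ϕ(t) ≠ 0 one has v'(t) = 0 if and only if ϕ'(t)/ϕ(t) = Σ'(t)/Σ(t); hence the transformation is proper precisely when ϕ is not proportional to Σ. -/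
/-!
Since `Σ` never vanishes, the quotient rule gives `(1/Σ)' = -Σ'/Σ²`, and substituting
`Σ' = -(1/2) ϕ Σ` turns this into `(1/2) ϕ (1/Σ)`. For `v = ϕ/(2Σ)` the numerator of the
derivative is twice `ϕ' Σ - ϕ Σ'`, whose vanishing is the equality of the logarithmic derivatives
of `ϕ` and `Σ` wherever `ϕ ≠ 0`.
-/

/-- first example of Section VIII, eqs. (7.d)-(7.h): if the
shear scalar `Σ` (here `Sg`) is positive and satisfies `Σ' = -(1/2)ϕΣ`, then
`γ = 1/Σ` satisfies the conformal Killing equation `γ' = (1/2)ϕγ` along `e`,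
with conformal factor `v = γ' = ϕ/(2Σ)`; moreover, wherever `ϕ ≠ 0`, `v' = 0`
iff `ϕ'/ϕ = Σ'/Σ`, i.e. the transformation is proper precisely when `ϕ` is not
proportional to `Σ`. -/
theorem stmt_13 (ϕ Sg : ℝ → ℝ) (hSg : Differentiable ℝ Sg)
    (hpos : ∀ t : ℝ, Sg t > 0)
    (hode : ∀ t : ℝ, deriv Sg t = -(1 / 2) * ϕ t * Sg t) :
    (∀ t : ℝ, deriv (fun s => 1 / Sg s) t = (1 / 2) * ϕ t * (1 / Sg t)) ∧
    (∀ t : ℝ, deriv (fun s => 1 / Sg s) t = ϕ t / (2 * Sg t)) ∧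
    (Differentiable ℝ ϕ → ∀ t : ℝ, ϕ t ≠ 0 →
      (deriv (fun s => ϕ s / (2 * Sg s)) t = 0 ↔
        deriv ϕ t / ϕ t = deriv Sg t / Sg t)) := by
  have hne : ∀ t, Sg t ≠ 0 := fun t => (hpos t).ne'
  have hγ : ∀ t, deriv (fun s => 1 / Sg s) t = (1 / 2) * ϕ t * (1 / Sg t) := by
    intro t
    have h := (hasDerivAt_const t (1 : ℝ)).fun_div (hSg t).hasDerivAt (hne t)
    rw [h.deriv, hode t]
    have := hne t
    field_simp
    ring
  refine ⟨hγ, fun t => ?_, fun hϕ t ht => ?_⟩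
  · rw [hγ t]
    have := hne t
    field_simp
  · have hS := hne t
    have h := (hϕ t).hasDerivAt.fun_div ((hSg t).hasDerivAt.const_mul 2)
      (mul_ne_zero two_ne_zero hS)
    -- Both sides say that the Wronskian `ϕ' Σ - ϕ Σ'` vanishes at `t`.
    rw [h.deriv, div_eq_zero_iff, or_iff_left (pow_ne_zero 2 (mul_ne_zero two_ne_zero hS)),
      div_eq_div_iff ht hS]
    constructor <;> intro e <;> linarith
end

section
/- Let ϕ, f : ℝ → ℝ with f differentiable, f(t) > 0 and f'(t) = −(3/2)·ϕ(t)·f(t) for all t. Then γ := f^{−1/3} satisfies γ'(t) = (1/2)·ϕ(t)·γ(t) for all t (so X^μ = γe^μ satisfies the conformal Killing equation along e^μ), and the associated conformal factor is v = γ' = ϕ/(2·f^{1/3}). Moreover, if ϕ is differentiable, then at every t with ϕ(t) ≠ 0 one has v'(t) = 0 if and only if ϕ'(t)/ϕ(t) = f'(t)/(3·f(t)); hence the transformation is proper precisely when ϕ is not proportional to f^{1/3}. -/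
/-!
Everything follows from the logarithmic derivative of a power, `(f ^ p)' = p (f' / f) f ^ p` for
positive `f`. With `p = -1/3` the field equation `f' / f = -(3/2) ϕ` turns it into the conformal
Killing equation. With `p = 1/3` and the quotient rule, `v = ϕ / (2 f ^ (1/3))` has
`v' = (ϕ' - ϕ f' / (3 f)) / (2 f ^ (1/3))`, so that `v'` vanishes exactly when the logarithmic
derivatives of `ϕ` and `f ^ (1/3)` agree.
-/

theorem hasDerivAt_rpow_logDeriv {f : ℝ → ℝ} {f' t : ℝ} (hf : HasDerivAt f f' t)
    (hpos : 0 < f t) (p : ℝ) :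
    HasDerivAt (fun s => f s ^ p) (p * (f' / f t) * f t ^ p) t := by
  convert hf.rpow_const (p := p) (Or.inl hpos.ne') using 1
  rw [Real.rpow_sub_one hpos.ne']
  ring

/-- second example of Section VIII, eqs. (7.i)-(7.m): if
`f = ρ + p` is positive and satisfies `f' = -(3/2)ϕf`, then `γ = f^{-1/3}`
satisfies the conformal Killing equation `γ' = (1/2)ϕγ` along `e`, with
conformal factor `v = γ' = ϕ/(2f^{1/3})`; moreover, wherever `ϕ ≠ 0`,
`v' = 0` iff `ϕ'/ϕ = f'/(3f)`, i.e. the transformation is proper precisely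
when `ϕ` is not proportional to `f^{1/3}`. -/
theorem stmt_14 (ϕ f : ℝ → ℝ) (hf : Differentiable ℝ f)
    (hpos : ∀ t : ℝ, f t > 0)
    (hode : ∀ t : ℝ, deriv f t = -(3 / 2) * ϕ t * f t) :
    (∀ t : ℝ, deriv (fun s => f s ^ (-(1 / 3) : ℝ)) t
        = (1 / 2) * ϕ t * f t ^ (-(1 / 3) : ℝ)) ∧
    (∀ t : ℝ, deriv (fun s => f s ^ (-(1 / 3) : ℝ)) t
        = ϕ t / (2 * f t ^ ((1 : ℝ) / 3))) ∧
    (Differentiable ℝ ϕ → ∀ t : ℝ, ϕ t ≠ 0 →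
      (deriv (fun s => ϕ s / (2 * f s ^ ((1 : ℝ) / 3))) t = 0 ↔
        deriv ϕ t / ϕ t = deriv f t / (3 * f t))) := by
  have killing : ∀ t : ℝ, deriv (fun s => f s ^ (-(1 / 3) : ℝ)) t
      = (1 / 2) * ϕ t * f t ^ (-(1 / 3) : ℝ) := by
    intro t
    have hft : f t ≠ 0 := (hpos t).ne'
    rw [(hasDerivAt_rpow_logDeriv (hf t).hasDerivAt (hpos t) _).deriv, hode t]
    field_simp
  refine ⟨killing, fun t => ?_, fun hϕ t hϕt => ?_⟩
  · rw [killing t, Real.rpow_neg (hpos t).le]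
    ring
  · have hft : f t ≠ 0 := (hpos t).ne'
    have hu : f t ^ ((1 : ℝ) / 3) ≠ 0 := (Real.rpow_pos_of_pos (hpos t) _).ne'
    have hv : deriv (fun s => ϕ s / (2 * f s ^ ((1 : ℝ) / 3))) t
        = (deriv ϕ t - ϕ t * (deriv f t / (3 * f t))) / (2 * f t ^ ((1 : ℝ) / 3)) := by
      have hpow := hasDerivAt_rpow_logDeriv (hf t).hasDerivAt (hpos t) ((1 : ℝ) / 3)
      refine ((hϕ t).hasDerivAt.fun_div (hpow.const_mul 2) (mul_ne_zero two_ne_zero hu)).deriv.trans ?_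
      -- Only the nonvanishing of `f ^ (1/3)` matters; as an atom it is not rewritten as a power of `f`.
      generalize f t ^ ((1 : ℝ) / 3) = u at hu
      field_simp
    rw [hv, div_eq_zero_iff, or_iff_left (mul_ne_zero two_ne_zero hu), sub_eq_zero,
      div_eq_iff hϕt, mul_comm (ϕ t)]
end
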